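/- arXiv:1504.06105 — 2 statements merged into one kernel-verified Lean document; each statement's English description precedes it below -/
import Mathlib

section
/- Let w̄ = (w₁,…,w_k) and v̄ = (v₁,…,v_k) be tuples of words with typ(w̄) = typ(v̄) (type over the empty tuple of constants). If wᵢ is incomparable left of vᵢ and vᵢ ≼ w_j, then w_j is incomparable left of v_j and wᵢ is incomparable left of w_j. Symmetrically, if wᵢ is incomparable right of vᵢ and vᵢ ≼ w_j, then w_j is incomparable right of v_j and wᵢ is incomparable right of w_j. -/
/-!
Being incomparable left means branching: `x` and `y` contain `p ++ [a]` and `p ++ [b]` with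
`a < b` as prefixes (`incompLeft_iff`). This is stable under extending either word. If
`w i` is left of `v i ≼ w j`, then `w i` is left of `w j`; the type isomorphism preserves both
`≼` and `⊑`, so `v i` is left of `v j`, and extending `v i` to `w j` shows that `w j` is left
of `v j`. The right-hand version is the mirror image.
-/

namespace CLTL

/-- A word is a finite sequence of rationals. -/
abbrev Word := List ℚ

/-- Lexicographic order on lists over a linear order: `w ⊑ v` iff `w` is a prefix of `v`,
or they branch at some position with the letter of `w` smaller. -/
def lexLe {α : Type*} [LinearOrder α] (w v : List α) : Prop :=
  w <+: v ∨ ∃ (p : List α) (a b : α), a < b ∧ (p ++ [a]) <+: w ∧ (p ++ [b]) <+: v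

/-- Longest common prefix of two lists. -/
def lcp {α : Type*} [DecidableEq α] : List α → List α → List α
  | a :: w, b :: v => if a = b then a :: lcp w v else []
  | _, _ => []

/-- Iterated longest common prefix of a nonempty list of words. -/
def listLCP : List Word → Word
  | [] => []
  | [x] => x
  | x :: xs => lcp x (listLCP xs)

/-- Insertion of an `m`-gap at `u`. -/
def iota (u : Word) (m : ℕ) (w : Word) : Word :=
  if u <+: w then u ++ List.replicate m 0 ++ w.drop u.length else w

/-- The maximal common ancestor tree of a tuple `w` together with constants `C`:
`{ε}` together with all iterated longest common prefixes of nonempty subsets of entries. -/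
def MCAT (C : List Word) {k : ℕ} (w : Fin k → Word) : Set Word :=
  insert [] { x | ∃ I : Finset (Fin (k + C.length)),
    I.Nonempty ∧ x = listLCP (I.toList.map (Fin.append w C.get)) }

/-- `h` is the induced isomorphism witnessing `typ_C(w) = typ_C(v)`. -/
def IsInducedIso (C : List Word) {k : ℕ} (w v : Fin k → Word) (h : Word → Word) : Prop :=
  Set.BijOn h (MCAT C w) (MCAT C v) ∧
  (∀ x ∈ MCAT C w, ∀ y ∈ MCAT C w,
    (x <+: y ↔ h x <+: h y) ∧ (lexLe x y ↔ lexLe (h x) (h y))) ∧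
  (∀ c ∈ C, h c = c) ∧
  (∀ i : Fin k, h (w i) = v i)

/-- `typ_C(w) = typ_C(v)`. -/
def SameTyp (C : List Word) {k : ℕ} (w v : Fin k → Word) : Prop :=
  ∃ h : Word → Word, IsInducedIso C w v h

/-- The stretching condition on an isomorphism `h` of `MCAT_C(w)`:
`|h e| - |h d| ≥ |e| - |d|` whenever `d` is a proper prefix of `e`. -/
def StretchCond (C : List Word) {k : ℕ} (w : Fin k → Word) (h : Word → Word) : Prop :=
  ∀ d ∈ MCAT C w, ∀ e ∈ MCAT C w, d <+: e → d ≠ e →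
    e.length + (h d).length ≤ (h e).length + d.length

/-- `w ≼* v` for tuples of words. -/
def Stretch (C : List Word) {k : ℕ} (w v : Fin k → Word) : Prop :=
  ∃ h : Word → Word, IsInducedIso C w v h ∧ StretchCond C w h

/-- `≼*` on configurations. -/
def ConfigLe (C : List Word) {Q : Type*} {n : ℕ}
    (c d : Q × (Fin n → Word)) : Prop :=
  c.1 = d.1 ∧ Stretch C c.2 d.2

/-- A transition relation is type-invariant. -/
def TypeInvariant (C : List Word) {Q : Type*} {n : ℕ}
    (step : (Q × (Fin n → Word)) → (Q × (Fin n → Word)) → Prop) : Prop :=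
  ∀ (q p : Q) (w v w' v' : Fin n → Word),
    step (q, w) (p, v) → SameTyp C (Fin.append w v) (Fin.append w' v') →
      step (q, w') (p, v')

/-- Finite runs, indexed by `Fin (N+1)`. -/
def IsFinRun {Q : Type*} {n : ℕ}
    (step : (Q × (Fin n → Word)) → (Q × (Fin n → Word)) → Prop)
    {N : ℕ} (r : Fin (N + 1) → Q × (Fin n → Word)) : Prop :=
  ∀ i : Fin N, step (r i.castSucc) (r i.succ)

/-- Infinite runs. -/
def IsInfRun {Q : Type*} {n : ℕ}
    (step : (Q × (Fin n → Word)) → (Q × (Fin n → Word)) → Prop)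
    (r : ℕ → Q × (Fin n → Word)) : Prop :=
  ∀ i : ℕ, step (r i) (r (i + 1))

/-- The pair `(w, v)` (of tuples of equal type) is contracting. -/
def ContractingPair (C : List Word) {k : ℕ} (w v : Fin k → Word) : Prop :=
  ∃ h : Word → Word, IsInducedIso C w v h ∧
    ((∃ d ∈ MCAT C w, h d <+: d ∧ h d ≠ d) ∨
     (∃ d ∈ MCAT C w, ∃ e ∈ MCAT C w,
        d <+: e ∧ d ≠ e ∧ h e = e ∧ d <+: h d ∧ d ≠ h d))

/-- A set of words `T` has `n`-gaps above `B`. -/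
def HasGaps (n : ℕ) (T B : Set Word) : Prop :=
  ∀ d ∈ T, ∀ e ∈ T, d <+: e → d ≠ e → (∀ b ∈ B, ¬ e <+: b) → n + d.length < e.length

/-- A word `w` is incomparable left of `v` if `w ⊑ v` but `w` is not a prefix of `v`. -/
def IncompLeft (w v : Word) : Prop := lexLe w v ∧ ¬ w <+: v

lemma incompLeft_iff {x y : Word} :
    IncompLeft x y ↔ ∃ (p : Word) (a b : ℚ), a < b ∧ (p ++ [a]) <+: x ∧ (p ++ [b]) <+: y := by
  constructor
  · rintro ⟨h | h, hn⟩
    · exact absurd h hn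
    · exact h
  · rintro ⟨p, a, b, hab, hx, hy⟩
    refine ⟨Or.inr ⟨p, a, b, hab, hx, hy⟩, fun hxy => ?_⟩
    -- Both one-letter extensions of `p` would be prefixes of `y` of equal length.
    have hpre : (p ++ [a]) <+: (p ++ [b]) :=
      List.prefix_of_prefix_length_le (hx.trans hxy) hy (by simp)
    have heq := hpre.eq_of_length (by simp)
    simp only [List.append_cancel_left_eq, List.cons.injEq, and_true] at heq
    exact hab.ne heq

lemma IncompLeft.mono {x y x' y' : Word} (h : IncompLeft x y) (hx : x <+: x') (hy : y <+: y') :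
    IncompLeft x' y' := by
  obtain ⟨p, a, b, hab, h1, h2⟩ := incompLeft_iff.1 h
  exact incompLeft_iff.2 ⟨p, a, b, hab, h1.trans hx, h2.trans hy⟩

lemma mem_MCAT (C : List Word) {k : ℕ} (w : Fin k → Word) (i : Fin k) : w i ∈ MCAT C w :=
  Or.inr ⟨{Fin.castAdd _ i}, Finset.singleton_nonempty _, by simp [listLCP]⟩

lemma SameTyp.incompLeft {C : List Word} {k : ℕ} {w v : Fin k → Word} (h : SameTyp C w v)
    {i j : Fin k} (hij : IncompLeft (w i) (w j)) : IncompLeft (v i) (v j) := by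
  obtain ⟨f, -, hf, -, hv⟩ := h
  have hp := hf (w i) (mem_MCAT C w i) (w j) (mem_MCAT C w j)
  rw [hv, hv] at hp
  exact ⟨hp.2.1 hij.1, fun hpre => hij.2 (hp.1.2 hpre)⟩

/-- If `typ(w̄) = typ(v̄)` (over the empty tuple of constants), `wᵢ` is incomparable
left (right) of `vᵢ`, and `vᵢ ≼ wⱼ`, then `wⱼ` is incomparable left (right) of `vⱼ` and
incomparable right (left) of `wᵢ`. -/
theorem stmt8 {k : ℕ} (w v : Fin k → Word) (h : SameTyp [] w v) (i j : Fin k) :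
    (IncompLeft (w i) (v i) → v i <+: w j →
      IncompLeft (w j) (v j) ∧ IncompLeft (w i) (w j)) ∧
    (IncompLeft (v i) (w i) → v i <+: w j →
      IncompLeft (v j) (w j) ∧ IncompLeft (w j) (w i)) := by
  constructor
  · intro hl hp
    have hw : IncompLeft (w i) (w j) := hl.mono List.prefix_rfl hp
    exact ⟨(h.incompLeft hw).mono hp List.prefix_rfl, hw⟩
  · intro hr hp
    have hw : IncompLeft (w j) (w i) := hr.mono hp List.prefix_rfl
    exact ⟨(h.incompLeft hw).mono List.prefix_rfl hp, hw⟩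

end CLTL
end

section
/- Let → be a type-invariant transition relation. For every noncontracting loop r = (c₀,…,c_N) there exists a stretching loop r' = (c₀',…,c_N') (a run with respect to →) of the same length, with the same state at every position, such that c_i ≼* c_i' for all 0 ≤ i ≤ N. -/
/-!
Every word of the run is transformed by one and the same map `stretch g`, which inserts `g u`
zeros directly behind each nonempty prefix `u` of a word. Such a map preserves longest common
prefixes, the prefix order and the lexicographic order, and it only widens distances. If `g`
vanishes on the constants it also fixes them, so it preserves all types over `C`: the image of the
run is again a run, pointwise `≼*`-above the original one.

It remains to choose `g` so that the image loop is stretching. Let `h` be the induced isomorphism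
between the two ends of the loop and `S` the ancestor tree of its first tuple. Below a fixed point
of `h`, noncontraction forces `h` to be the identity, so the distances there do not change. For a
moved node `e` (that is, `h e ≠ e`) it suffices that the gap `g (h e)` exceeds the length of
`stretch g e`, which depends on the values of `g` at the prefixes of `e`. Hence it is enough that
the relation "`h e'` is a prefix of `e`" on moved nodes is acyclic (`rank_lt`): if `h` moves `e'`
up lexicographically then `e' < e`; if `h` moves `e'` down, then noncontraction gives `e < e'`, and
`e` is moved down as well. So moved-up nodes ranked increasingly, followed by the moved-down nodes
ranked decreasingly, give a rank function, and `g (h e)` is taken exponential in the rank of `e`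
(`exists_gap`).
-/

namespace CLTL

/-! ### The lexicographic order -/

theorem lexLe_nil (v : Word) : lexLe [] v := Or.inl List.nil_prefix

theorem lexLe_cons_nil (a : ℚ) (w : Word) : ¬ lexLe (a :: w) [] := by
  rintro (h | ⟨p, x, y, -, -, h⟩)
  · simp at h
  · simp at h

theorem lexLe_cons_cons (a b : ℚ) (w v : Word) :
    lexLe (a :: w) (b :: v) ↔ a < b ∨ (a = b ∧ lexLe w v) := by
  constructor
  · rintro (h | ⟨p, x, y, hxy, h1, h2⟩)
    · rw [List.cons_prefix_cons] at h
      exact Or.inr ⟨h.1, Or.inl h.2⟩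
    · cases p with
      | nil =>
        simp only [List.nil_append, List.cons_prefix_cons] at h1 h2
        left; rw [← h1.1, ← h2.1]; exact hxy
      | cons c p =>
        simp only [List.cons_append, List.cons_prefix_cons] at h1 h2
        exact Or.inr ⟨h1.1.symm.trans h2.1, Or.inr ⟨p, x, y, hxy, h1.2, h2.2⟩⟩
  · rintro (h | ⟨rfl, h | ⟨p, x, y, hxy, h1, h2⟩⟩)
    · exact Or.inr ⟨[], a, b, h, by simp, by simp⟩
    · exact Or.inl (by simpa using h)
    · exact Or.inr ⟨a :: p, x, y, hxy, by simpa using h1, by simpa using h2⟩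

theorem lexLe_refl (w : Word) : lexLe w w := Or.inl (List.prefix_refl w)

theorem lexLe_total : ∀ w v : Word, lexLe w v ∨ lexLe v w
  | [], v => Or.inl (lexLe_nil v)
  | _ :: _, [] => Or.inr (lexLe_nil _)
  | a :: w, b :: v => by
    simp only [lexLe_cons_cons]
    rcases lt_trichotomy a b with h | h | h
    · simp [h]
    · have := lexLe_total w v
      simpa [h] using this
    · simp [h]

theorem lexLe_antisymm : ∀ {w v : Word}, lexLe w v → lexLe v w → w = v
  | [], [], _, _ => rfl
  | [], _ :: _, _, h => absurd h (lexLe_cons_nil _ _)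
  | _ :: _, [], h, _ => absurd h (lexLe_cons_nil _ _)
  | a :: w, b :: v, h1, h2 => by
    rw [lexLe_cons_cons] at h1 h2
    rcases h1 with h1 | ⟨rfl, h1⟩
    · rcases h2 with h2 | ⟨rfl, h2⟩
      · exact absurd h1 (lt_asymm h2)
      · exact absurd h1 (lt_irrefl _)
    · rcases h2 with h2 | ⟨-, h2⟩
      · exact absurd h2 (lt_irrefl _)
      · rw [lexLe_antisymm h1 h2]

theorem lexLe_trans : ∀ {w v u : Word}, lexLe w v → lexLe v u → lexLe w u
  | [], _, _, _, _ => lexLe_nil _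
  | _ :: _, [], _, h, _ => absurd h (lexLe_cons_nil _ _)
  | _ :: _, _ :: _, [], _, h => absurd h (lexLe_cons_nil _ _)
  | a :: w, b :: v, c :: u, h1, h2 => by
    rw [lexLe_cons_cons] at *
    rcases h1 with h1 | ⟨rfl, h1⟩
    · rcases h2 with h2 | ⟨rfl, h2⟩
      · exact Or.inl (h1.trans h2)
      · exact Or.inl h1
    · rcases h2 with h2 | ⟨rfl, h2⟩
      · exact Or.inl h2
      · exact Or.inr ⟨rfl, lexLe_trans h1 h2⟩

/-- The words with a given prefix form a lexicographically convex set. -/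
theorem prefix_of_lexLe : ∀ {p x y : Word}, lexLe p x → lexLe x y → p <+: y → p <+: x
  | [], _, _, _, _, _ => List.nil_prefix
  | _ :: _, [], _, h, _, _ => absurd h (lexLe_cons_nil _ _)
  | _ :: _, _ :: _, [], _, h, _ => absurd h (lexLe_cons_nil _ _)
  | a :: p, b :: x, c :: y, h1, h2, h3 => by
    rw [lexLe_cons_cons] at h1 h2
    rw [List.cons_prefix_cons] at *
    obtain ⟨rfl, h3⟩ := h3
    rcases h1 with h1 | ⟨rfl, h1⟩
    · rcases h2 with h2 | ⟨rfl, h2⟩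
      · exact absurd h1 (lt_asymm h2)
      · exact absurd h1 (lt_irrefl _)
    · rcases h2 with h2 | ⟨-, h2⟩
      · exact absurd h2 (lt_irrefl _)
      · exact ⟨rfl, prefix_of_lexLe h1 h2 h3⟩

/-! ### Inserting gaps everywhere -/

/-- Insertion of `g u` zeros directly behind every nonempty prefix `u` of a word; the value
`g []` is ignored, so the empty word is fixed. -/
def stretch (g : Word → ℕ) : Word → Word
  | [] => []
  | a :: w => a :: (List.replicate (g [a]) 0 ++ stretch (fun u => g (a :: u)) w)

theorem lcp_append (p w v : Word) : lcp (p ++ w) (p ++ v) = p ++ lcp w v := by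
  induction p with
  | nil => rfl
  | cons a p ih => simp [lcp, ih]

theorem stretch_lcp (g : Word → ℕ) (w v : Word) :
    stretch g (lcp w v) = lcp (stretch g w) (stretch g v) := by
  induction w generalizing g v with
  | nil => cases v <;> simp [lcp, stretch]
  | cons a w ih =>
    cases v with
    | nil => simp [lcp, stretch]
    | cons b v =>
      by_cases h : a = b
      · subst h
        simp [lcp, stretch, ih, lcp_append]
      · simp [lcp, stretch, h]

theorem stretch_prefix_iff (g : Word → ℕ) (w v : Word) :
    w <+: v ↔ stretch g w <+: stretch g v := by
  induction w generalizing g v with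
  | nil => simp [stretch]
  | cons a w ih =>
    cases v with
    | nil => simp [stretch]
    | cons b v =>
      simp only [stretch, List.cons_prefix_cons]
      refine and_congr_right ?_
      rintro rfl
      rw [List.prefix_append_right_inj, ih]

theorem lexLe_append (p w v : Word) : lexLe (p ++ w) (p ++ v) ↔ lexLe w v := by
  induction p with
  | nil => rfl
  | cons a p ih => simp [lexLe_cons_cons, ih]

theorem stretch_lexLe_iff (g : Word → ℕ) (w v : Word) :
    lexLe w v ↔ lexLe (stretch g w) (stretch g v) := by
  induction w generalizing g v with
  | nil => simp [stretch, lexLe_nil]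
  | cons a w ih =>
    cases v with
    | nil => simp [stretch, lexLe_cons_nil]
    | cons b v =>
      simp only [stretch, lexLe_cons_cons]
      refine or_congr_right (and_congr_right ?_)
      rintro rfl
      rw [lexLe_append, ← ih]

theorem stretch_injective (g : Word → ℕ) : Function.Injective (stretch g) := by
  intro w v h
  apply lexLe_antisymm
  · rw [stretch_lexLe_iff g, h]; exact lexLe_refl _
  · rw [stretch_lexLe_iff g, h]; exact lexLe_refl _

theorem stretch_append (g : Word → ℕ) (d t : Word) :
    stretch g (d ++ t) = stretch g d ++ stretch (fun u => g (d ++ u)) t := by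
  induction d generalizing g with
  | nil => simp [stretch]
  | cons a d ih => simp [stretch, ih]

theorem length_le_stretch (g : Word → ℕ) (w : Word) : w.length ≤ (stretch g w).length := by
  induction w generalizing g with
  | nil => simp
  | cons a w ih =>
    have := ih (fun u => g (a :: u))
    simp only [stretch, List.length_cons, List.length_append]
    omega

theorem stretch_length_le (g : Word → ℕ) (M : ℕ) (w : Word) (hM : ∀ p, p <+: w → g p ≤ M) :
    (stretch g w).length ≤ w.length * (1 + M) := by
  induction w generalizing g with
  | nil => simp [stretch]
  | cons a w ih =>
    have h1 := ih (fun u => g (a :: u)) (fun p hp => hM _ (by simpa using hp))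
    have h2 := hM [a] (by simp)
    simp only [stretch, List.length_cons, List.length_append, List.length_replicate]
    nlinarith

/-- The gap inserted behind a word is part of its distance to each proper prefix. -/
theorem stretch_gap (g : Word → ℕ) {d e : Word} (h : d <+: e) (hne : d ≠ e) :
    (stretch g d).length + g e ≤ (stretch g e).length := by
  obtain ⟨t, rfl⟩ := h
  have ht : t ≠ [] := by rintro rfl; simp at hne
  obtain ⟨s, a, rfl⟩ := List.eq_nil_or_concat t |>.resolve_left ht
  rw [List.concat_eq_append, ← List.append_assoc, stretch_append g (d ++ s), stretch_append g d]
  simp only [stretch, List.length_append, List.length_cons, List.length_replicate]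
  omega

theorem stretch_eq_self (g : Word → ℕ) (w : Word) (h : ∀ p, p <+: w → g p = 0) :
    stretch g w = w := by
  induction w generalizing g with
  | nil => rfl
  | cons a w ih =>
    have h1 := ih (fun u => g (a :: u)) (fun p hp => h _ (by simpa using hp))
    have h2 := h [a] (by simp)
    simp [stretch, h1, h2]

/-! ### Ancestor trees and gap insertion -/

theorem mem_MCAT_const (C : List Word) {k : ℕ} (w : Fin k → Word) {c : Word} (hc : c ∈ C) :
    c ∈ MCAT C w := by
  obtain ⟨j, rfl⟩ := List.mem_iff_get.1 hc
  refine Or.inr ⟨{Fin.natAdd k j}, by simp, ?_⟩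
  simp [listLCP]

theorem MCAT_finite (C : List Word) {k : ℕ} (w : Fin k → Word) : (MCAT C w).Finite := by
  refine Set.Finite.insert _ (Set.Finite.subset (Set.finite_range
    (fun I : Finset (Fin (k + C.length)) => listLCP (I.toList.map (Fin.append w C.get)))) ?_)
  rintro x ⟨I, -, rfl⟩
  exact ⟨I, rfl⟩

theorem stretch_listLCP (g : Word → ℕ) (l : List Word) :
    stretch g (listLCP l) = listLCP (l.map (stretch g)) := by
  induction l with
  | nil => rfl
  | cons x l ih =>
    cases l with
    | nil => rfl
    | cons y l =>
      simp only [listLCP, List.map_cons, stretch_lcp] at ih ⊢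
      rw [ih]

theorem append_comp {a b : ℕ} (φ : Word → Word) (w : Fin a → Word) (v : Fin b → Word) :
    Fin.append (φ ∘ w) (φ ∘ v) = φ ∘ Fin.append w v := by
  funext i
  refine Fin.addCases (fun i => ?_) (fun i => ?_) i <;> simp

theorem MCAT_stretch (C : List Word) (g : Word → ℕ) (hg : ∀ c ∈ C, stretch g c = c)
    {k : ℕ} (w : Fin k → Word) : MCAT C (stretch g ∘ w) = stretch g '' MCAT C w := by
  have hC : C.get = stretch g ∘ C.get := by
    funext j
    exact (hg _ (List.get_mem C j)).symm
  have key : ∀ I : Finset (Fin (k + C.length)),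
      listLCP (I.toList.map (Fin.append (stretch g ∘ w) C.get)) =
        stretch g (listLCP (I.toList.map (Fin.append w C.get))) := by
    intro I
    have : Fin.append (stretch g ∘ w) C.get = stretch g ∘ Fin.append w C.get := by
      conv_lhs => rw [hC]
      exact append_comp _ _ _
    rw [this, stretch_listLCP, List.map_map]
  unfold MCAT
  rw [Set.image_insert_eq]
  congr 1
  ext x
  constructor
  · rintro ⟨I, hI, rfl⟩
    exact ⟨_, ⟨I, hI, rfl⟩, (key I).symm⟩
  · rintro ⟨_, ⟨I, hI, rfl⟩, rfl⟩
    exact ⟨I, hI, (key I).symm⟩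

theorem isInducedIso_stretch (C : List Word) (g : Word → ℕ) (hg : ∀ c ∈ C, stretch g c = c)
    {k : ℕ} (w : Fin k → Word) : IsInducedIso C w (stretch g ∘ w) (stretch g) := by
  refine ⟨?_, fun x _ y _ => ⟨stretch_prefix_iff g x y, stretch_lexLe_iff g x y⟩, hg,
    fun _ => rfl⟩
  rw [MCAT_stretch C g hg]
  exact (stretch_injective g).injOn.bijOn_image

theorem stretch_tuple (C : List Word) (g : Word → ℕ) (hg : ∀ c ∈ C, stretch g c = c)
    {k : ℕ} (w : Fin k → Word) : Stretch C w (stretch g ∘ w) := by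
  refine ⟨stretch g, isInducedIso_stretch C g hg w, ?_⟩
  rintro d - e - ⟨t, rfl⟩ -
  have := length_le_stretch (fun u => g (d ++ u)) t
  rw [stretch_append]
  simp only [List.length_append]
  omega

/-- Gap insertion conjugates the induced isomorphism `h`, so the stretching condition for the
images can be checked on the original tuples. -/
theorem stretch_conj (C : List Word) (g : Word → ℕ) (hg : ∀ c ∈ C, stretch g c = c)
    {k : ℕ} (w v : Fin k → Word) (h : Word → Word) (hh : IsInducedIso C w v h)
    (hs : ∀ d ∈ MCAT C w, ∀ e ∈ MCAT C w, d <+: e → d ≠ e →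
      (stretch g e).length + (stretch g (h d)).length ≤
        (stretch g (h e)).length + (stretch g d).length) :
    Stretch C (stretch g ∘ w) (stretch g ∘ v) := by
  have hinv : ∀ x, Function.invFun (stretch g) (stretch g x) = x :=
    Function.leftInverse_invFun (stretch_injective g)
  obtain ⟨hbij, hord, hconst, htup⟩ := hh
  refine ⟨fun x => stretch g (h (Function.invFun (stretch g) x)), ⟨?_, ?_, ?_, ?_⟩, ?_⟩
  · rw [MCAT_stretch C g hg, MCAT_stretch C g hg]
    refine ⟨?_, ?_, ?_⟩
    · rintro _ ⟨x, hx, rfl⟩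
      simp only [hinv]
      exact ⟨_, hbij.mapsTo hx, rfl⟩
    · rintro _ ⟨x, hx, rfl⟩ _ ⟨y, hy, rfl⟩ hxy
      simp only [hinv] at hxy
      rw [hbij.injOn hx hy (stretch_injective g hxy)]
    · rintro _ ⟨y, hy, rfl⟩
      obtain ⟨x, hx, rfl⟩ := hbij.surjOn hy
      exact ⟨_, ⟨x, hx, rfl⟩, by simp only [hinv]⟩
  · rw [MCAT_stretch C g hg]
    rintro _ ⟨x, hx, rfl⟩ _ ⟨y, hy, rfl⟩
    simp only [hinv, ← stretch_prefix_iff, ← stretch_lexLe_iff]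
    exact hord x hx y hy
  · intro c hc
    have : Function.invFun (stretch g) c = c := by
      conv_lhs => rw [← hg c hc]
      exact hinv c
    simp only [this, hconst c hc, hg c hc]
  · intro i
    simp only [Function.comp_apply, hinv, htup]
  · unfold StretchCond
    rw [MCAT_stretch C g hg]
    rintro _ ⟨d, hd, rfl⟩ _ ⟨e, he, rfl⟩ hde hne
    simp only [hinv]
    exact hs d hd e he ((stretch_prefix_iff g d e).2 hde) (fun h => hne (by rw [h]))

/-! ### Choosing the gaps -/

open Classical in
/-- The lexicographic position of `e` in the finite set `S`. -/
noncomputable def lexPos (S : Finset Word) (e : Word) : ℕ :=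
  (S.filter (fun y => lexLe y e ∧ y ≠ e)).card

open Classical in
/-- The rank of a node under `h`: nodes that `h` moves up come first, in lexicographic order,
and nodes that `h` moves down come after them, in reverse lexicographic order. -/
noncomputable def rank (S : Finset Word) (h : Word → Word) (e : Word) : ℕ :=
  if lexLe e (h e) then lexPos S e else 2 * S.card - lexPos S e

theorem lexPos_lt_card {S : Finset Word} {e : Word} (he : e ∈ S) : lexPos S e < S.card := by
  classical
  apply Finset.card_lt_card
  rw [Finset.ssubset_iff_of_subset (Finset.filter_subset _ _)]
  exact ⟨e, he, by simp⟩

theorem lexPos_lt {S : Finset Word} {e e' : Word} (he' : e' ∈ S) (h : lexLe e' e)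
    (hne : e' ≠ e) : lexPos S e' < lexPos S e := by
  classical
  unfold lexPos
  apply Finset.card_lt_card
  rw [Finset.ssubset_iff_of_subset]
  · exact ⟨e', by simp [he', h, hne], by simp⟩
  · intro y hy
    simp only [Finset.mem_filter] at hy ⊢
    refine ⟨hy.1, lexLe_trans hy.2.1 h, ?_⟩
    rintro rfl
    exact hne (lexLe_antisymm h hy.2.1)

/-- Acyclicity of the dependencies between gaps: if the image of `e'` lies on the branch leading
to `e`, then `e'` has smaller rank than `e`. -/
theorem rank_lt {S : Finset Word} {h : Word → Word}
    (hmono : ∀ x ∈ S, ∀ y ∈ S, lexLe x y → lexLe (h x) (h y))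
    (hnc : ∀ d ∈ S, h d <+: d → h d = d)
    {e e' : Word} (he : e ∈ S) (he' : e' ∈ S) (hm : h e ≠ e) (hm' : h e' ≠ e')
    (hp : h e' <+: e) : rank S h e' < rank S h e := by
  have hpe : lexLe (h e') e := Or.inl hp
  have c := lexPos_lt_card he
  have c' := lexPos_lt_card he'
  unfold rank
  by_cases hu : lexLe e' (h e')
  · have hlt : lexPos S e' < lexPos S e := by
      refine lexPos_lt he' (lexLe_trans hu hpe) ?_
      rintro rfl
      exact hm' (hnc _ he hp)
    rw [if_pos hu]
    split_ifs <;> omega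
  · have hd : lexLe (h e') e' := (lexLe_total _ _).resolve_left hu
    -- `e' ≤ e` would place `e'` between `h e'` and `e`, making `h e'` a prefix of `e'`.
    have hnot : ¬ lexLe e' e := fun hle => hm' (hnc _ he' (prefix_of_lexLe hd hle hp))
    have hle : lexLe e e' := (lexLe_total _ _).resolve_right hnot
    have hlt : lexPos S e < lexPos S e' := by
      refine lexPos_lt he hle ?_
      rintro rfl
      exact hnot hle
    have hnu : ¬ lexLe e (h e) := fun hue =>
      hm (lexLe_antisymm (lexLe_trans (hmono _ he _ he' hle) hpe) hue)
    rw [if_neg hu, if_neg hnu]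
    omega

/-- A gap function supported on the images of moved nodes for which the gap behind `h e`
outweighs the whole stretched word `e`. -/
theorem exists_gap (S : Finset Word) (h : Word → Word)
    (hinj : ∀ x ∈ S, ∀ y ∈ S, h x = h y → x = y)
    (hmono : ∀ x ∈ S, ∀ y ∈ S, lexLe x y → lexLe (h x) (h y))
    (hnc : ∀ d ∈ S, h d <+: d → h d = d) :
    ∃ g : Word → ℕ, (∀ p, g p ≠ 0 → ∃ e ∈ S, h e ≠ e ∧ h e = p) ∧
      ∀ e ∈ S, h e ≠ e → (stretch g e).length ≤ g (h e) := by
  classical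
  -- With `L` bounding the lengths in `S` and all gaps up to `e` at most `B ^ rank e`, the stretched
  -- word has length at most `L * (1 + B ^ rank e)`, which is below `B ^ (rank e + 1)`.
  set L := S.sup List.length with hL
  set B := 2 * L + 1 with hB
  let g : Word → ℕ := fun p =>
    if hp : ∃ e ∈ S, h e ≠ e ∧ h e = p then B ^ (rank S h hp.choose + 1) else 0
  have g1 : ∀ e ∈ S, h e ≠ e → g (h e) = B ^ (rank S h e + 1) := by
    intro e he hm
    have hp : ∃ x ∈ S, h x ≠ x ∧ h x = h e := ⟨e, he, hm, rfl⟩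
    have hch : hp.choose = e := hinj _ hp.choose_spec.1 _ he hp.choose_spec.2.2
    simp only [g, dif_pos hp, hch]
  have g0 : ∀ p, g p ≠ 0 → ∃ e ∈ S, h e ≠ e ∧ h e = p := by
    intro p hp
    by_contra hcon
    exact hp (dif_neg hcon)
  refine ⟨g, g0, fun e he hm => ?_⟩
  have hbound : ∀ p, p <+: e → g p ≤ B ^ rank S h e := by
    intro p hp
    by_cases hgp : g p = 0
    · rw [hgp]; exact Nat.zero_le _
    · obtain ⟨x, hx, hmx, rfl⟩ := g0 p hgp
      rw [g1 x hx hmx]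
      exact Nat.pow_le_pow_right (by omega) (rank_lt hmono hnc he hx hm hmx hp)
  have hlen : e.length ≤ L := Finset.le_sup (f := List.length) he
  have hpos : 1 ≤ B ^ rank S h e := Nat.one_le_pow _ _ (by omega)
  rw [g1 e he hm, pow_succ]
  refine (stretch_length_le g _ e hbound).trans ?_
  calc e.length * (1 + B ^ rank S h e) ≤ L * (1 + B ^ rank S h e) :=
        Nat.mul_le_mul_right _ hlen
    _ ≤ B ^ rank S h e * B := by rw [hB] at *; nlinarith

/-- For every noncontracting loop there is a stretching loop of the same length, with the
same states, which is pointwise `≼*`-larger. -/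
theorem stmt9 (C : List Word) (hC : ∀ c ∈ C, ∀ c' : Word, c' <+: c → c' ∈ C)
    {Q : Type*} {n : ℕ}
    (step : (Q × (Fin n → Word)) → (Q × (Fin n → Word)) → Prop)
    (hstep : TypeInvariant C step)
    {N : ℕ} (r : Fin (N + 1) → Q × (Fin n → Word)) (hr : IsFinRun step r)
    (hstate : (r 0).1 = (r (Fin.last N)).1)
    (htyp : SameTyp C (r 0).2 (r (Fin.last N)).2)
    (hnc : ¬ ContractingPair C (r 0).2 (r (Fin.last N)).2) :
    ∃ r' : Fin (N + 1) → Q × (Fin n → Word),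
      IsFinRun step r' ∧
      (∀ i : Fin (N + 1), (r' i).1 = (r i).1) ∧
      (∀ i : Fin (N + 1), ConfigLe C (r i) (r' i)) ∧
      ConfigLe C (r' 0) (r' (Fin.last N)) := by
  obtain ⟨h, hh⟩ := htyp
  have hnc1 : ∀ d ∈ MCAT C (r 0).2, h d <+: d → h d = d := by
    intro d hd hp
    by_contra hne
    exact hnc ⟨h, hh, Or.inl ⟨d, hd, hp, hne⟩⟩
  have hnc2 : ∀ d ∈ MCAT C (r 0).2, ∀ e ∈ MCAT C (r 0).2, d <+: e → d ≠ e → h e = e →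
      h d = d := by
    intro d hd e he hde hne hfix
    have hdp : h d <+: e := by
      have := ((hh.2.1 d hd e he).1).1 hde
      rwa [hfix] at this
    rcases List.prefix_or_prefix_of_prefix hdp hde with hp | hp
    · exact hnc1 d hd hp
    · by_contra hdd
      exact hnc ⟨h, hh, Or.inr ⟨d, hd, e, he, hde, hne, hfix, hp, fun h' => hdd h'.symm⟩⟩
  have hfin := MCAT_finite C (r 0).2
  obtain ⟨g, g0, g1⟩ := exists_gap hfin.toFinset h
    (fun x hx y hy hxy => hh.1.injOn (hfin.mem_toFinset.1 hx) (hfin.mem_toFinset.1 hy) hxy)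
    (fun x hx y hy =>
      ((hh.2.1 x (hfin.mem_toFinset.1 hx) y (hfin.mem_toFinset.1 hy)).2).1)
    (fun d hd => hnc1 d (hfin.mem_toFinset.1 hd))
  -- Constants are fixed by `h`, hence are not images of moved nodes.
  have hg : ∀ c ∈ C, stretch g c = c := by
    intro c hc
    refine stretch_eq_self g c fun p hp => ?_
    by_contra hgp
    have hpC := hC c hc p hp
    obtain ⟨e, he, hm, rfl⟩ := g0 p hgp
    have := hh.1.injOn (mem_MCAT_const C (r 0).2 hpC) (hfin.mem_toFinset.1 he)
      (hh.2.2.1 _ hpC)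
    exact hm this
  refine ⟨fun i => ((r i).1, stretch g ∘ (r i).2), ?_, fun _ => rfl,
    fun i => ⟨rfl, stretch_tuple C g hg _⟩, hstate, ?_⟩
  · intro i
    refine hstep _ _ (r i.castSucc).2 (r i.succ).2 _ _ (hr i) ⟨stretch g, ?_⟩
    rw [append_comp]
    exact isInducedIso_stretch C g hg _
  · refine stretch_conj C g hg _ _ h hh fun d hd e he hde hne => ?_
    by_cases hm : h e = e
    · rw [hm, hnc2 d hd e he hde hne hm]
    · have hgap := stretch_gap g (((hh.2.1 d hd e he).1).1 hde)
        (fun heq => hne (hh.1.injOn hd he heq))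
      have := g1 e (hfin.mem_toFinset.2 he) hm
      omega

end CLTL
end
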